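/- arXiv:1312.1325 — 2 statements merged into one kernel-verified Lean document; each statement's English description precedes it below -/
import Mathlib

section
/- Let Q be a prime power with Q ≡ ±2 (mod 5) and Q > 13, and α ∈ F_{Q^2}^*. Then x^(2Q+3) + α·x permutes F_{Q^2} if and only if α^(2Q−2) − 3α^(Q−1) + 1 = 0. -/
/-- power sum -/
lemma psum {F : Type*} [Field F] [Fintype F] (n : ℕ) (hn : 0 < n) :
    ∑ x : F, x ^ n = if (Fintype.card F - 1) ∣ n then (-1 : F) else 0 := by
  classical
  rw [← FiniteField.sum_pow_units, ← Finset.sum_subset (Finset.subset_univ (Finset.univ.image (fun u : Fˣ => (u : F))))]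
  · rw [Finset.sum_image]
    intro a _ b _ h; exact Units.ext h
  · intro x _ hx
    have : x = 0 := by
      by_contra h
      exact hx (Finset.mem_image.2 ⟨Units.mk0 x h, Finset.mem_univ _, rfl⟩)
    rw [this, zero_pow hn.ne']

lemma hermite {F : Type*} [Field F] [Fintype F] (Q : ℕ) (hQ : 13 < Q)
    (hF : Fintype.card F = Q ^ 2) (a b : F) (f : F → F) (hf : Function.Bijective f)
    (hg : ∀ x, f x ^ (Q+1) = (x ^ (Q+1)) ^ 5 + a * (x ^ (Q+1)) ^ 3 + b * x ^ (Q+1))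
    (r : ℕ) (h0 : 0 < r) (hr : r < Q - 1) :
    ∑ k ∈ Finset.range (r+1), ∑ i ∈ Finset.range (k+1),
      (if (Q - 1) ∣ (5 * r - 2 * (k + i)) then
        (r.choose k : F) * (k.choose i : F) * a ^ (k - i) * b ^ i else 0) = 0 := by
  have hc : Fintype.card F - 1 = (Q+1) * (Q-1) := by
    rw [hF]; simpa using Nat.sq_sub_sq Q 1
  have hdv : ∀ n, (Fintype.card F - 1) ∣ (Q+1) * n ↔ (Q-1) ∣ n := by
    intro n; rw [hc]; exact Nat.mul_dvd_mul_iff_left (by omega)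
  have e1 : ∑ x : F, f x ^ ((Q+1) * r) = 0 := by
    rw [hf.sum_comp (fun y => y ^ ((Q+1)*r)), psum _ (by positivity), if_neg]
    rw [hdv]
    intro h; exact absurd (Nat.le_of_dvd h0 h) (by omega)
  have e2 : ∀ x : F, f x ^ ((Q+1) * r) = ∑ k ∈ Finset.range (r+1), ∑ i ∈ Finset.range (k+1),
      (r.choose k : F) * (k.choose i : F) * a ^ (k - i) * b ^ i *
        x ^ ((Q+1) * (5 * r - 2 * (k + i))) := by
    intro x
    rw [pow_mul, hg]
    simp only [pow_mul x (Q+1)]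
    generalize x ^ (Q+1) = t
    rw [show t ^ 5 + a * t ^ 3 + b * t = (b * t + a * t^3) + t ^ 5 by ring, add_pow]
    apply Finset.sum_congr rfl
    intro k hk
    rw [add_pow, Finset.sum_mul, Finset.sum_mul]
    apply Finset.sum_congr rfl
    intro i hi
    simp only [Finset.mem_range] at hk hi
    rw [show 5 * r - 2 * (k+i) = 5 * (r - k) + 3 * (k - i) + i by omega]
    ring
  simp only [e2] at e1
  rw [Finset.sum_comm] at e1
  rw [← neg_eq_zero, ← Finset.sum_neg_distrib]
  refine Eq.trans ?_ e1
  apply Finset.sum_congr rfl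
  intro k hk
  rw [Finset.sum_comm, ← Finset.sum_neg_distrib]
  apply Finset.sum_congr rfl
  intro i hi
  simp only [Finset.mem_range] at hk hi
  rw [← Finset.mul_sum, psum _ (Nat.mul_pos (by omega) (by omega))]
  simp only [hdv]
  split_ifs <;> ring

lemma hermite2 {F : Type*} [Field F] [Fintype F] (Q : ℕ) (hQ : 13 < Q)
    (hF : Fintype.card F = Q ^ 2) (a b : F) (f : F → F) (hf : Function.Bijective f)
    (hg : ∀ x, f x ^ (Q+1) = (x ^ (Q+1)) ^ 5 + a * (x ^ (Q+1)) ^ 3 + b * x ^ (Q+1))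
    (r j : ℕ) (hr : 5 * r = Q - 1 + 2 * j) (hj : 2 * j < Q - 1) :
    ∑ i ∈ Finset.range (j/2+1),
        (r.choose (j-i) : F) * ((j-i).choose i : F) * a ^ (j-2*i) * b ^ i = 0 := by
  rw [← hermite Q hQ hF a b f hf hg r (by omega) (by omega), Finset.sum_sigma']
  have key : ∀ k i, k ≤ r → i ≤ k → ((Q-1) ∣ (5 * r - 2 * (k + i)) ↔ k + i = j) := by
    intro k i hk hi
    constructor
    · rintro ⟨c, h3⟩
      have : c = 1 := by
        have : c < 2 := by
          by_contra hc
          have : (Q-1) * 2 ≤ (Q-1) * c := Nat.mul_le_mul_left _ (by omega)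
          omega
        have : c ≠ 0 := by rintro rfl; omega
        omega
      subst this
      omega
    · intro h
      exact ⟨1, by omega⟩
  symm
  apply Finset.sum_bij_ne_zero (fun x _ _ => x.2)
  · rintro ⟨k, i⟩ h hne
    simp only [Finset.mem_sigma, Finset.mem_range, ne_eq, ite_eq_right_iff, Classical.not_imp] at h hne ⊢
    have := (key k i (by omega) (by omega)).1 hne.1
    omega
  · rintro ⟨k, i⟩ h hne ⟨k', i'⟩ h' hne' hh
    simp only [Finset.mem_sigma, Finset.mem_range, ne_eq, ite_eq_right_iff, Classical.not_imp] at h hne h' hne' hh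
    have h1 := (key k i (by omega) (by omega)).1 hne.1
    have h2 := (key k' i' (by omega) (by omega)).1 hne'.1
    subst hh
    have : k = k' := by omega
    subst this
    rfl
  · intro i hi hne
    simp only [Finset.mem_range] at hi
    have hle : j - i ≤ r := by
      by_contra h
      exact hne (by rw [Nat.choose_eq_zero_of_lt (by omega)]; simp)
    refine ⟨⟨j - i, i⟩, ?_, ?_, rfl⟩
    · simp only [Finset.mem_sigma, Finset.mem_range]; omega
    · simp only
      rw [if_pos ((key _ _ hle (by omega)).2 (by omega))]
      rwa [show j - i - i = j - 2 * i by omega]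
  · rintro ⟨k, i⟩ h hne
    simp only [Finset.mem_sigma, Finset.mem_range, ne_eq, ite_eq_right_iff, Classical.not_imp] at h hne ⊢
    have := (key k i (by omega) (by omega)).1 hne.1
    rw [if_pos hne.1, show j - i = k by omega, show j - 2 * i = k - i by omega]

/-- periodicity of binomials -/
lemma choose_per (p : ℕ) [Fact p.Prime] (e : ℕ) : ∀ (n m k : ℕ), n % p ^ e = m % p ^ e →
    k < p ^ e → n.choose k ≡ m.choose k [MOD p] := by
  induction e with
  | zero => intro n m k _ h; simp at h; subst h; simp [Nat.ModEq]
  | succ e ih =>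
    intro n m k h hk
    refine (Choose.choose_modEq_choose_mod_mul_choose_div_nat).trans
      (Nat.ModEq.trans ?_ (Choose.choose_modEq_choose_mod_mul_choose_div_nat).symm)
    have h1 : n % p = m % p := by
      have := congrArg (· % p) h
      simpa [Nat.mod_mod_of_dvd _ (dvd_pow_self p (Nat.succ_ne_zero e))] using this
    have h2 : n / p % p ^ e = m / p % p ^ e := by
      have := congrArg (· / p) h
      rwa [pow_succ', Nat.mod_mul_right_div_self, Nat.mod_mul_right_div_self] at this
    rw [h1]
    exact Nat.ModEq.mul_left _ (ih _ _ _ h2 (Nat.div_lt_of_lt_mul (by rwa [← pow_succ'])))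

lemma choose_cast {F : Type*} [Field F] (p : ℕ) [Fact p.Prime] [CharP F p] (e : ℕ) (n m : ℕ)
    (h : n % p ^ e = m % p ^ e) (k : ℕ) (hk : k < p ^ e) : (n.choose k : F) = (m.choose k : F) :=
  (CharP.natCast_eq_natCast F p).2 (choose_per p e n m k h hk)

lemma choose_desc {F : Type*} [Field F] (r k : ℕ) :
    ((k+1 : ℕ) : F) * (r.choose (k+1) : F) = (r.choose k : F) * ((r : F) - k) := by
  rcases le_or_gt k r with h | h
  · have := Nat.choose_succ_right_eq r k
    rw [← Nat.cast_sub h, ← Nat.cast_mul, ← Nat.cast_mul, ← this, mul_comm]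
  · rw [Nat.choose_eq_zero_of_lt h, Nat.choose_eq_zero_of_lt (by omega)]; simp

/-- sufficiency core -/
lemma dickson {K : Type*} [Field K] [IsAlgClosed K] (p m Q : ℕ) [Fact p.Prime] [CharP K p]
    (hQp : Q = p ^ m) (hQ5 : Q % 5 = 2 ∨ Q % 5 = 3) (hQ : 13 < Q) (c s t : K) (hc0 : c ≠ 0)
    (hc : c ^ Q = c) (hs : s ^ Q = s) (ht : t ^ Q = t)
    (h : s ^ 5 - 5 * c * s ^ 3 + 5 * c ^ 2 * s = t ^ 5 - 5 * c * t ^ 3 + 5 * c ^ 2 * t) :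
    s = t := by
  have hex : ∀ t : K, t ^ Q = t → ∃ u : K, u ≠ 0 ∧ t = u + c / u ∧ u ^ (Q ^ 2) = u := by
    intro t ht
    obtain ⟨u, hu⟩ := IsAlgClosed.exists_root (Polynomial.X ^ 2 - Polynomial.C t * Polynomial.X + Polynomial.C c)
      (by
        rw [show (Polynomial.X ^ 2 - Polynomial.C t * Polynomial.X + Polynomial.C c : Polynomial K).degree = 2 by compute_degree!]
        decide)
    simp [Polynomial.IsRoot] at hu
    have hu0 : u ≠ 0 := by
      rintro rfl; simp at hu; exact hc0 hu
    have h2 : (u ^ Q) ^ 2 - t * u ^ Q + c = 0 := by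
      have : (u ^ 2 - t * u + c) ^ Q = 0 := by rw [hu, zero_pow (by omega)]
      rw [hQp] at *
      rw [add_pow_char_pow, sub_pow_char_pow, mul_pow, ht, hc] at this
      rw [← this]; ring
    have h3 : (u ^ Q - u) * (u ^ Q - (t - u)) = 0 := by
      linear_combination h2 - hu
    refine ⟨u, hu0, by field_simp; linear_combination -hu, ?_⟩
    rw [pow_two, pow_mul]
    rcases mul_eq_zero.1 h3 with h4 | h4
    · rw [sub_eq_zero.1 h4, sub_eq_zero.1 h4]
    · have h5 := sub_eq_zero.1 h4
      rw [h5]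
      have : (t - u) ^ Q = t ^ Q - u ^ Q := by rw [hQp, sub_pow_char_pow]
      rw [this, ht, h5]; ring
  have h5 : ∀ u v : K, u ≠ 0 → v ≠ 0 → u ^ (Q^2) = u → v ^ (Q^2) = v → u ^ 5 = v ^ 5 → u = v := by
    intro u v hu hv h1 h2 h3
    have h4 : (u / v) ^ 5 = 1 := by rw [div_pow, h3, div_self (pow_ne_zero _ hv)]
    have h6 : (u / v) ^ (Q ^ 2 - 1) = 1 := by
      have : (u / v) ^ (Q ^ 2 - 1) * (u / v) = 1 * (u / v) := by
        rw [← pow_succ, Nat.sub_add_cancel (Nat.one_le_pow _ _ (by omega)), div_pow, h1, h2, one_mul]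
      exact mul_right_cancel₀ (div_ne_zero hu hv) this
    have h7 : Nat.gcd 5 (Q^2-1) = 1 := by
      refine (Nat.Prime.coprime_iff_not_dvd (by norm_num)).2 ?_
      have h9 : Q ^ 2 % 5 = 4 := by rcases hQ5 with h | h <;> simp [Nat.pow_mod, h]
      omega
    have := pow_gcd_eq_one.2 ⟨h4, h6⟩
    rw [h7, pow_one] at this
    exact (div_eq_one_iff_eq hv).1 this
  obtain ⟨u, hu0, rfl, hu⟩ := hex s hs
  obtain ⟨v, hv0, rfl, hv⟩ := hex t ht
  have hcQ : c ^ (Q ^ 2) = c := by rw [pow_two, pow_mul, hc, hc]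
  have hw0 : c / v ≠ 0 := div_ne_zero hc0 hv0
  have key : (u ^ 5 - v ^ 5) * (u ^ 5 - (c / v) ^ 5) = 0 := by
    field_simp at h ⊢
    linear_combination h
  rcases mul_eq_zero.1 key with h1 | h1
  · rw [h5 u v hu0 hv0 hu hv (sub_eq_zero.1 h1)]
  · rw [h5 u (c/v) hu0 hw0 hu (by rw [div_pow, hcQ, hv]) (sub_eq_zero.1 h1)]
    field_simp; ring

lemma nec9 {F : Type*} [Field F] (r : ℕ) (hr' : (5 : F) * r = 17) (a v : F)
    (hv : a ^ 2 = 5 * v) (h2 : (2:F) ≠ 0) (h3 : (3:F) ≠ 0) (h5 : (5:F) ≠ 0) (h7 : (7:F) ≠ 0)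
    (h17 : (17:F) ≠ 0) (hv0 : v ≠ 0)
    (h : ∑ i ∈ Finset.range (9/2+1),
        (r.choose (9-i) : F) * ((9-i).choose i : F) * a ^ (9-2*i) * (2 * v) ^ i = 0) : False := by
  have ha0 : a ≠ 0 := by
    rintro rfl
    exact mul_ne_zero h5 hv0 (by rw [← hv]; simp)
  have a3 : a ^ 3 = 5 * (a * v) := by linear_combination a * hv
  have a5 : a ^ 5 = 25 * (a * v ^ 2) := by
    rw [show a ^ 5 = a * (a ^ 2) ^ 2 by ring, hv]; ring
  have a7 : a ^ 7 = 125 * (a * v ^ 3) := by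
    rw [show a ^ 7 = a * (a ^ 2) ^ 3 by ring, hv]; ring
  have a9 : a ^ 9 = 625 * (a * v ^ 4) := by
    rw [show a ^ 9 = a * (a ^ 2) ^ 4 by ring, hv]; ring
  simp only [Finset.sum_range_succ, Finset.sum_range_zero, Nat.reduceDiv, Nat.reduceAdd,
    Nat.reduceMul, Nat.reduceSub, a3, a5, a7, a9] at h
  simp only [show Nat.choose 9 0 = 1 from rfl, show Nat.choose 8 1 = 8 from rfl,
    show Nat.choose 7 2 = 21 from rfl, show Nat.choose 6 3 = 20 from rfl,
    show Nat.choose 5 4 = 5 from rfl] at h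
  push_cast at h
  have E1 : 5 * (r.choose 1 : F) = 17 := by rw [Nat.choose_one_right]; exact hr'
  have E2 : 50 * (r.choose 2 : F) = 204 := by
    have := choose_desc (F := F) r 1
    push_cast at this
    linear_combination 25 * this + (12) * E1 + 5 * (r.choose 1 : F) * hr'
  have E3 : 750 * (r.choose 3 : F) = 1428 := by
    have := choose_desc (F := F) r 2
    push_cast at this
    linear_combination 250 * this + (7) * E2 + 50 * (r.choose 2 : F) * hr'
  have E4 : 15000 * (r.choose 4 : F) = 2856 := by
    have := choose_desc (F := F) r 3
    push_cast at this
    linear_combination 3750 * this + (2) * E3 + 750 * (r.choose 3 : F) * hr'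
  have E5 : 375000 * (r.choose 5 : F) = -8568 := by
    have := choose_desc (F := F) r 4
    push_cast at this
    linear_combination 75000 * this + (-3) * E4 + 15000 * (r.choose 4 : F) * hr'
  have E6 : 11250000 * (r.choose 6 : F) = 68544 := by
    have := choose_desc (F := F) r 5
    push_cast at this
    linear_combination 1875000 * this + (-8) * E5 + 375000 * (r.choose 5 : F) * hr'
  have E7 : 393750000 * (r.choose 7 : F) = -891072 := by
    have := choose_desc (F := F) r 6
    push_cast at this
    linear_combination 56250000 * this + (-13) * E6 + 11250000 * (r.choose 6 : F) * hr'
  have E8 : 15750000000 * (r.choose 8 : F) = 16039296 := by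
    have := choose_desc (F := F) r 7
    push_cast at this
    linear_combination 1968750000 * this + (-18) * E7 + 393750000 * (r.choose 7 : F) * hr'
  have E9 : 708750000000 * (r.choose 9 : F) = -368903808 := by
    have := choose_desc (F := F) r 8
    push_cast at this
    linear_combination 78750000000 * this + (-23) * E8 + 15750000000 * (r.choose 8 : F) * hr'
  have hfin : (17 * 5 ^ 5 * 2 ^ 7 * 3 ^ 4 * 7 : F) * (a * v ^ 4) = 0 := by
    linear_combination 708750000000 * h - ((625) * (a * v ^ 4) * E9 + (90000) * (a * v ^ 4) * E8 + (3780000) * (a * v ^ 4) * E7 + (50400000) * (a * v ^ 4) * E6 + (151200000) * (a * v ^ 4) * E5)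
  refine mul_ne_zero ?_ (mul_ne_zero ha0 (pow_ne_zero 4 hv0)) hfin
  simp [h2, h3, h5, h7, h17]

lemma nec4 {F : Type*} [Field F] (r : ℕ) (hr' : (5 : F) * r = 7) (a b : F)
    (h2 : (2:F) ≠ 0) (h3 : (3:F) ≠ 0) (h7 : (7:F) ≠ 0)
    (h : ∑ i ∈ Finset.range (4/2+1),
        (r.choose (4-i) : F) * ((4-i).choose i : F) * a ^ (4-2*i) * b ^ i = 0) :
    a ^ 2 = 5 * b ∨ 2 * a ^ 2 = 5 * b := by
  norm_num [Finset.sum_range_succ, show Nat.choose 3 1 = 3 from rfl] at h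
  have E2 : 50 * (r.choose 2 : F) = 14 := by
    have := choose_desc (F := F) r 1
    rw [Nat.choose_one_right] at this
    push_cast at this
    linear_combination 25 * this + (5 * (r : F) + 2) * hr'
  have E3 : 750 * (r.choose 3 : F) = -42 := by
    have := choose_desc (F := F) r 2
    push_cast at this
    linear_combination 250 * this - 3 * E2 + 50 * (r.choose 2 : F) * hr'
  have E4 : 15000 * (r.choose 4 : F) = 336 := by
    have := choose_desc (F := F) r 3
    push_cast at this
    linear_combination 3750 * this - 8 * E3 + 750 * (r.choose 3 : F) * hr'
  have : (2 ^ 3 * 3 * 7 : F) * ((a ^ 2 - 5 * b) * (2 * a ^ 2 - 5 * b)) = 0 := by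
    linear_combination 15000 * h - a ^ 4 * E4 - 60 * a ^ 2 * b * E3 - 300 * b ^ 2 * E2
  rcases mul_eq_zero.1 this with h' | h'
  · exact absurd h' (by simp [h2, h3, h7])
  · rcases mul_eq_zero.1 h' with h' | h'
    · exact Or.inl (sub_eq_zero.1 h')
    · exact Or.inr (sub_eq_zero.1 h')

lemma nec2 {F : Type*} [Field F] (r : ℕ) (hr' : (5 : F) * r = 3) (a b : F)
    (h2 : (2:F) ≠ 0) (h3 : (3:F) ≠ 0)
    (h : ∑ i ∈ Finset.range (2/2+1),
        (r.choose (2-i) : F) * ((2-i).choose i : F) * a ^ (2-2*i) * b ^ i = 0) :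
    a ^ 2 = 5 * b := by
  norm_num [Finset.sum_range_succ] at h
  have E2 : 50 * (r.choose 2 : F) = -6 := by
    have := choose_desc (F := F) r 1
    rw [Nat.choose_one_right] at this
    push_cast at this
    linear_combination 25 * this + (5 * (r : F) - 2) * hr'
  have : (2 * 3 : F) * (a ^ 2 - 5 * b) = 0 := by
    linear_combination -50 * h + a ^ 2 * E2 + 10 * b * hr'
  rcases mul_eq_zero.1 this with h' | h'
  · exact absurd h' (by simp [h2, h3])
  · exact sub_eq_zero.1 h'

lemma nec {F : Type*} [Field F] (p m Q : ℕ) [hp : Fact p.Prime] [CharP F p] (hQp : Q = p ^ m)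
    (hQ5 : Q % 5 = 2 ∨ Q % 5 = 3) (hQ : 13 < Q) (a b : F) (hb : b ≠ 0)
    (haQ : a ^ Q = a) (hbQ : b ^ Q = b) (h27 : Q = 27 → a = 0 → b = 0)
    (H : ∀ r j, 5 * r = Q - 1 + 2 * j → 2 * j < Q - 1 → ∑ i ∈ Finset.range (j/2+1),
        (r.choose (j-i) : F) * ((j-i).choose i : F) * a ^ (j-2*i) * b ^ i = 0) :
    a ^ 2 = 5 * b := by
  have hp1 : p.Prime := hp.out
  have hdvd : ∀ e, p ^ (e - 1) < Q → p ^ e ∣ Q := by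
    intro e he
    rw [hQp] at he ⊢
    have := (Nat.pow_lt_pow_iff_right hp1.one_lt).1 he
    exact pow_dvd_pow _ (by omega)
  have hm0 : m ≠ 0 := by rintro rfl; simp at hQp; omega
  have hpQ : p ∣ Q := hQp ▸ dvd_pow_self p hm0
  have hQ0 : (Q : F) = 0 := (CharP.cast_eq_zero_iff F p Q).2 hpQ
  have hne : ∀ n : ℕ, n.Prime → p ≠ n → (n : F) ≠ 0 := by
    intro n hn hpn h
    exact hpn ((Nat.prime_dvd_prime_iff_eq hp1 hn).1 ((CharP.cast_eq_zero_iff F p n).1 h))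
  have hp5 : p ≠ 5 := by rintro rfl; omega
  have h5 : (5:F) ≠ 0 := by exact_mod_cast hne 5 (by norm_num) hp5
  have hcc : ∀ e r r0 k, r % p ^ e = r0 % p ^ e → k < p ^ e →
      (r.choose k : F) = (r0.choose k : F) := fun e r r0 k h hk => choose_cast p e r r0 h k hk
  have HH : ∀ e r0 r j, 5 * r = Q - 1 + 2 * j → 2 * j < Q - 1 → r % p ^ e = r0 % p ^ e →
      j < p ^ e → ∑ i ∈ Finset.range (j/2+1),
        (r0.choose (j-i) : F) * ((j-i).choose i : F) * a ^ (j-2*i) * b ^ i = 0 := by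
    intro e r0 r j h1 h2 h3 h4
    rw [← H r j h1 h2]
    apply Finset.sum_congr rfl
    intro i _
    rw [hcc e r r0 (j - i) h3 (by omega)]
  have hcast : ∀ r c : ℕ, 5 * r = Q + c → (5 : F) * r = c := by
    intro r c h
    have := congrArg (Nat.cast : ℕ → F) h
    push_cast at this
    rw [this, hQ0, zero_add]
  by_cases p2 : p = 2
  · subst p2
    have hz : (2:F) = 0 := by exact_mod_cast CharP.cast_eq_zero F 2
    obtain ⟨w, hw⟩ := hdvd 4 (by norm_num; omega)
    norm_num at hw
    rcases hQ5 with h | h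
    · have := HH 2 3 ((Q+3)/5) 2 (by omega) (by omega) (by norm_num; omega) (by norm_num)
      norm_num [Finset.sum_range_succ, Nat.choose] at this
      linear_combination this - (a ^ 2 + 4 * b) * hz
    · have := HH 3 3 ((Q+7)/5) 4 (by omega) (by omega) (by norm_num; omega) (by norm_num)
      norm_num [Finset.sum_range_succ, Nat.choose] at this
      have : b * (a ^ 2 - 5 * b) = 0 := by
        linear_combination this - (a ^ 2 * b + 4 * b ^ 2) * hz
      exact sub_eq_zero.1 ((mul_eq_zero.1 this).resolve_left hb)
  have h2 : (2:F) ≠ 0 := by exact_mod_cast hne 2 (by norm_num) p2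
  by_cases p3 : p = 3
  · subst p3
    have hz : (3:F) = 0 := by exact_mod_cast CharP.cast_eq_zero F 3
    obtain ⟨w, hw⟩ := hdvd 3 (by norm_num; omega)
    norm_num at hw
    rcases hQ5 with h | h
    · have ha0 : a ≠ 0 := by
        intro ha
        by_cases hQ27 : Q = 27
        · exact hb (h27 hQ27 ha)
        · have := HH 3 14 ((Q+43)/5) 22 (by omega) (by omega) (by norm_num; omega) (by norm_num)
          simp only [Finset.sum_range_succ, Finset.sum_range_zero, ha] at this
          norm_num [show Nat.choose 14 11 = 364 from rfl] at this
          rcases this with h' | h'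
          · have : (1:F) = 0 := by linear_combination h' - 121 * hz
            exact one_ne_zero this
          · exact hb h'
      have := HH 3 8 ((Q+13)/5) 7 (by omega) (by omega) (by norm_num; omega) (by norm_num)
      norm_num [Finset.sum_range_succ, Nat.choose] at this
      have h4 : a * ((a ^ 2 - 5 * b) * ((a ^ 2 + b) ^ 2 + b ^ 2)) = 0 := by
        linear_combination 2 * this + ((-5) * (a ^ 7 * b ^ 0) + (-113) * (a ^ 5 * b ^ 1) + (-376) * (a ^ 3 * b ^ 2) + (-190) * (a ^ 1 * b ^ 3)) * hz
      rcases mul_eq_zero.1 ((mul_eq_zero.1 h4).resolve_left ha0) with h6 | h6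
      · exact sub_eq_zero.1 h6
      · exfalso
        have hQ4 : Q % 4 = 3 := by
          have e : Q = 81 ^ (m / 4) * 3 ^ (m % 4) := by
            rw [hQp, show 81 = 3 ^ 4 by norm_num, ← pow_mul, ← pow_add, Nat.div_add_mod]
          have e2 : Q % 20 = 3 ^ (m % 4) % 20 := by
            rw [e, Nat.mul_mod, Nat.pow_mod]; norm_num
          have : m % 4 < 4 := Nat.mod_lt _ (by norm_num)
          interval_cases m % 4 <;> norm_num at e2 <;> omega
        set y := (a ^ 2 + b) / b with hy
        have y2 : y ^ 2 = -1 := by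
          rw [hy]; field_simp; linear_combination h6
        have yQ : y ^ Q = y := by
          rw [hy, div_pow, hbQ]
          congr 1
          rw [hQp, add_pow_char_pow, ← hQp, hbQ, ← pow_mul, mul_comm, pow_mul, haQ]
        have : y ^ Q = - y := by
          rw [show Q = 2 * (2 * (Q / 4) + 1) + 1 by omega, pow_succ, pow_mul, y2, pow_succ,
            pow_mul]
          simp
        have hy0 : 2 * y = 0 := by linear_combination this - yQ
        have hy0 : y = 0 := (mul_eq_zero.1 hy0).resolve_left h2
        rw [hy0] at y2
        norm_num at y2
    · have h4 := HH 2 5 ((Q+7)/5) 4 (by omega) (by omega) (by norm_num; omega) (by norm_num)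
      have h9 := HH 3 25 ((Q+17)/5) 9 (by omega) (by omega) (by norm_num; omega) (by norm_num)
      norm_num [Finset.sum_range_succ, Nat.choose] at h4 h9
      have ha0 : a ≠ 0 := by
        rintro rfl
        norm_num at h4
        rcases h4 with h' | h'
        · have : (1:F) = 0 := by linear_combination h' - 3 * hz
          exact one_ne_zero this
        · exact hb h'
      have : a ^ 3 * (a ^ 2 - 5 * b) ^ 3 = 0 := by
        linear_combination 2 * h9 + ((-1361983) * (a ^ 9 * b ^ 0) + (-5768405) * (a ^ 7 * b ^ 1) + (-6729775) * (a ^ 5 * b ^ 2) + (-2361375) * (a ^ 3 * b ^ 3) + (-177100) * (a ^ 1 * b ^ 4)) * hz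
      exact sub_eq_zero.1 (pow_eq_zero_iff (by norm_num) |>.1 ((mul_eq_zero.1 this).resolve_left (pow_ne_zero _ ha0)))
  have h3 : (3:F) ≠ 0 := by exact_mod_cast hne 3 (by norm_num) p3
  rcases hQ5 with h | h
  · exact nec2 ((Q+3)/5) (by exact_mod_cast hcast ((Q+3)/5) 3 (by omega)) a b h2 h3
      (H ((Q+3)/5) 2 (by omega) (by omega))
  by_cases p7 : p = 7
  · subst p7
    have hz : (7:F) = 0 := by exact_mod_cast CharP.cast_eq_zero F 7
    obtain ⟨w, hw⟩ := hdvd 2 (by norm_num; omega)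
    norm_num at hw
    have h9 := HH 2 23 ((Q+17)/5) 9 (by omega) (by omega) (by norm_num; omega) (by norm_num)
    have ha0 : a ≠ 0 := by
      intro ha
      have h14 := HH 2 25 ((Q+27)/5) 14 (by omega) (by omega) (by norm_num; omega) (by norm_num)
      simp only [Finset.sum_range_succ, Finset.sum_range_zero, ha] at h14
      norm_num [show Nat.choose 25 7 = 480700 from rfl] at h14
      rcases h14 with h' | h'
      · have : (1:F) = 0 := by linear_combination (-2) * h' + (2 * 68671 + 1) * hz
        exact one_ne_zero this
      · exact hb h'
    norm_num [Finset.sum_range_succ, Nat.choose] at h9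
    have : a ^ 7 * (a ^ 2 - 5 * b) = 0 := by
      linear_combination 5 * h9 + ((-583707) * (a ^ 9 * b ^ 0) + (-2801795) * (a ^ 7 * b ^ 1) + (-3677355) * (a ^ 5 * b ^ 2) + (-1442100) * (a ^ 3 * b ^ 3) + (-120175) * (a ^ 1 * b ^ 4)) * hz
    exact sub_eq_zero.1 ((mul_eq_zero.1 this).resolve_left (pow_ne_zero _ ha0))
  have h7 : (7:F) ≠ 0 := by exact_mod_cast hne 7 (by norm_num) p7
  rcases nec4 ((Q+7)/5) (by exact_mod_cast hcast ((Q+7)/5) 7 (by omega)) a b h2 h3 h7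
      (H ((Q+7)/5) 4 (by omega) (by omega)) with h' | h'
  · exact h'
  exfalso
  have hQ23 : Q ≠ 18 := by
    rintro rfl
    have h1 : p ∣ 2 * 3 * 3 := hpQ
    rcases (Nat.Prime.dvd_mul hp1).1 h1 with h1 | h1
    · rcases (Nat.Prime.dvd_mul hp1).1 h1 with h1 | h1
      · exact p2 ((Nat.prime_dvd_prime_iff_eq hp1 (by norm_num)).1 h1)
      · exact p3 ((Nat.prime_dvd_prime_iff_eq hp1 (by norm_num)).1 h1)
    · exact p3 ((Nat.prime_dvd_prime_iff_eq hp1 (by norm_num)).1 h1)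
  have ha0 : a ≠ 0 := by
    rintro rfl
    refine mul_ne_zero h5 hb (by rw [← h']; simp)
  by_cases p17 : p = 17
  · subst p17
    have hz : (17:F) = 0 := by exact_mod_cast CharP.cast_eq_zero F 17
    have : Q ≠ 17 := by rintro rfl; omega
    obtain ⟨w, hw⟩ := hdvd 2 (by norm_num; have := Nat.le_of_dvd (by omega) hpQ; omega)
    norm_num at hw
    have h19 := HH 2 123 ((Q+37)/5) 19 (by omega) (by omega) (by norm_num; omega) (by norm_num)
    have hb3 : b = -3 * a ^ 2 := by
      linear_combination (-7) * h' + (a ^ 2 - 2 * b) * hz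
    simp only [Finset.sum_range_succ, Finset.sum_range_zero, hb3] at h19
    norm_num [Nat.choose_eq_descFactorial_div_factorial] at h19
    have : (9 : F) * a ^ 19 = 0 := by
      linear_combination h19 - (9299046305934725355) * a ^ 19 * hz
    rcases mul_eq_zero.1 this with h1 | h1
    · have : (1:F) = 0 := by linear_combination 2 * h1 - hz
      exact one_ne_zero this
    · exact pow_ne_zero _ ha0 h1
  have h17 : (17:F) ≠ 0 := by exact_mod_cast hne 17 (by norm_num) p17
  have hb2 : b = 2 * (b / 2) := by field_simp
  have h9 := H ((Q+17)/5) 9 (by omega) (by omega)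
  rw [hb2] at h9
  refine nec9 ((Q+17)/5) (by exact_mod_cast hcast ((Q+17)/5) 17 (by omega)) a (b/2) ?_ h2 h3 h5 h7 h17
    (div_ne_zero hb h2) h9
  field_simp
  linear_combination h'

theorem stmt_14 (Q : ℕ) (hQ5 : Q % 5 = 2 ∨ Q % 5 = 3) (hQ : 13 < Q)
    (F : Type*) [Field F] [Fintype F] (hF : Fintype.card F = Q ^ 2)
    (α : F) (hα : α ≠ 0) :
    Function.Bijective (fun x : F => x ^ (2 * Q + 3) + α * x) ↔
      α ^ (2 * Q - 2) - 3 * α ^ (Q - 1) + 1 = 0 := by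
  obtain ⟨p, hchar⟩ := CharP.exists F
  obtain ⟨n, hp, hn⟩ := FiniteField.card F p
  haveI : Fact p.Prime := ⟨hp⟩
  obtain ⟨m, -, hQp⟩ := (Nat.dvd_prime_pow hp (m := n) (i := Q)).1
    (by rw [← hn, hF]; exact dvd_pow_self Q (by norm_num))
  have hQQ : ∀ x : F, (x ^ Q) ^ Q = x := by
    intro x
    rw [← pow_mul, ← pow_two, ← hF, FiniteField.pow_card]
  have hadd : ∀ x y : F, (x + y) ^ Q = x ^ Q + y ^ Q := by
    intro x y; rw [hQp, add_pow_char_pow]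
  obtain ⟨a, ha⟩ : ∃ a, a = α + α ^ Q := ⟨_, rfl⟩
  obtain ⟨b, hb⟩ : ∃ b, b = α * α ^ Q := ⟨_, rfl⟩
  have hb0 : b ≠ 0 := by rw [hb]; exact mul_ne_zero hα (pow_ne_zero _ hα)
  have haQ : a ^ Q = a := by rw [ha, hadd, hQQ, add_comm]
  have hbQ : b ^ Q = b := by rw [hb, mul_pow, hQQ, mul_comm]
  have hcond : α ^ (2 * Q - 2) - 3 * α ^ (Q - 1) + 1 = 0 ↔ a ^ 2 = 5 * b := by
    have e : a ^ 2 - 5 * b = α ^ 2 * (α ^ (2 * Q - 2) - 3 * α ^ (Q - 1) + 1) := by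
      have e1 : α ^ Q = α * α ^ (Q - 1) := by
        rw [← pow_succ', Nat.sub_add_cancel (by omega)]
      rw [ha, hb, e1, show 2 * Q - 2 = (Q - 1) * 2 by omega, pow_mul]
      ring
    rw [← sub_eq_zero (a := a ^ 2), e, mul_eq_zero, or_iff_right (pow_ne_zero _ hα)]
  rw [hcond]
  set f := (fun x : F => x ^ (2 * Q + 3) + α * x) with hf
  have hg : ∀ x, f x ^ (Q+1) = (x ^ (Q+1)) ^ 5 + a * (x ^ (Q+1)) ^ 3 + b * x ^ (Q+1) := by
    intro x
    have e1 : f x = x ^ 3 * (x ^ Q) ^ 2 + α * x := by simp only [hf]; ring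
    have e2 : f x ^ Q = (x ^ Q) ^ 3 * x ^ 2 + α ^ Q * x ^ Q := by
      rw [e1, hadd, mul_pow, mul_pow, ← pow_mul, mul_comm 3 Q, pow_mul, ← pow_mul (x ^ Q),
        mul_comm 2 Q, pow_mul (x ^ Q), hQQ]
    rw [pow_succ, e2, e1, pow_succ, ha, hb]
    ring
  constructor
  · intro hbij
    refine nec p m Q hQp hQ5 hQ a b hb0 haQ hbQ ?_ (hermite2 Q hQ hF a b f hbij hg)
    rintro h27 ha0
    subst h27
    have h14 := hermite 27 hQ hF a b f hbij hg 14 (by norm_num) (by norm_num)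
    have hp3 : p = 3 := by
      have : p ∣ 3 ^ 3 := by
        rw [show 3 ^ 3 = 27 by norm_num, hQp]
        refine dvd_pow_self p ?_
        rintro rfl; simp at hQp
      exact (Nat.prime_dvd_prime_iff_eq hp (by norm_num)).1 (hp.dvd_of_dvd_pow this)
    subst hp3
    have hz : (3:F) = 0 := by exact_mod_cast CharP.cast_eq_zero F 3
    have : (364 : F) * b ^ 11 = 0 := by
      rw [← h14]
      symm
      rw [Finset.sum_eq_single 11]
      · rw [Finset.sum_eq_single 11]
        · norm_num [show Nat.choose 14 11 = 364 from rfl]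
        · intro i hi hne
          simp only [Finset.mem_range] at hi
          rw [ha0, zero_pow (by omega)]; simp
        · simp
      · intro k hk hne
        apply Finset.sum_eq_zero
        intro i hi
        simp only [Finset.mem_range] at hi hk
        split_ifs with hd
        · have : i ≠ k := by rintro rfl; omega
          rw [ha0, zero_pow (by omega)]; simp
        · rfl
      · simp
    rcases mul_eq_zero.1 this with h' | h'
    · have : (1:F) = 0 := by linear_combination h' - 121 * hz
      exact absurd this one_ne_zero
    · exact pow_eq_zero_iff (by norm_num) |>.1 h'
  · intro hab
    have hp5 : p ≠ 5 := by
      rintro rfl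
      have : m ≠ 0 := by rintro rfl; simp at hQp; omega
      have : 5 ∣ Q := hQp ▸ dvd_pow_self 5 this
      omega
    have h5 : (5:F) ≠ 0 := by
      intro h
      exact hp5 ((Nat.prime_dvd_prime_iff_eq hp (by norm_num)).1
        ((CharP.cast_eq_zero_iff F p 5).1 (by exact_mod_cast h)))
    have h5Q : (5:F) ^ Q = 5 := by
      have := map_natCast (iterateFrobenius F p m) 5
      rw [iterateFrobenius_def, ← hQp] at this
      exact_mod_cast this
    obtain ⟨c, hc⟩ : ∃ c, a = -(5 * c) := ⟨-a / 5, by field_simp⟩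
    have hbc : b = 5 * c ^ 2 := by
      apply mul_left_cancel₀ h5
      rw [← hab, hc]; ring
    have hc0 : c ≠ 0 := by rintro rfl; exact hb0 (by rw [hbc]; simp)
    have hcQ : c ^ Q = c := by
      have e : c = -a / 5 := by rw [hc]; field_simp
      have e2 : (-a) ^ Q = - a := by
        have := hadd (-a) a
        rw [neg_add_cancel, zero_pow (by omega), haQ] at this
        linear_combination -this
      rw [e, div_pow, h5Q, e2]
    have hinj : ∀ s t : F, s ^ Q = s → t ^ Q = t →
        s ^ 5 + a * s ^ 3 + b * s = t ^ 5 + a * t ^ 3 + b * t → s = t := by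
      intro s t hs ht h
      let φ := algebraMap F (AlgebraicClosure F)
      haveI : CharP (AlgebraicClosure F) p := charP_of_injective_algebraMap φ.injective p
      apply φ.injective
      refine dickson p m Q hQp hQ5 hQ (φ c) (φ s) (φ t) ?_ ?_ ?_ ?_ ?_
      · exact (map_ne_zero φ).2 hc0
      · rw [← map_pow, hcQ]
      · rw [← map_pow, hs]
      · rw [← map_pow, ht]
      · have := congrArg φ h
        rw [hc, hbc] at this
        simp only [map_add, map_mul, map_pow, map_neg, map_ofNat] at this
        linear_combination this
    apply Finite.injective_iff_bijective.1
    intro x y hxy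
    have hN : ∀ x : F, (x ^ (Q+1)) ^ Q = x ^ (Q+1) := by
      intro x
      rw [pow_succ, mul_pow, hQQ, mul_comm]
    have hxy1 : x ^ (Q+1) = y ^ (Q+1) := by
      apply hinj _ _ (hN x) (hN y)
      rw [← hg, ← hg, hxy]
    have hfx : ∀ x, f x = x * ((x ^ (Q+1)) ^ 2 + α) := by
      intro x; simp only [hf]; ring
    by_cases hx : x = 0
    · rw [hx, zero_pow (by omega)] at hxy1
      rw [hx]
      exact ((pow_eq_zero_iff (by omega)).1 hxy1.symm).symm
    · have hx1 : f x ≠ 0 := by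
        intro h0
        have := hg x
        rw [h0, zero_pow (by omega)] at this
        have := hinj (x ^ (Q+1)) 0 (hN x) (zero_pow (by omega)) (by rw [← this]; simp)
        exact hx ((pow_eq_zero_iff (by omega)).1 this)
      have h1 := hxy
      rw [hfx] at hx1
      rw [hfx, hfx, ← hxy1] at h1
      exact mul_right_cancel₀ (right_ne_zero_of_mul hx1) h1
end

section
/- Let Q = 5^n with Q > 5, and α ∈ F_{Q^2}^*. Then x^(2Q+3) + α·x permutes F_{Q^2} if and only if α^(Q−1) = −1 or α^((Q−1)/2) = −1. -/
open Polynomial in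
lemma fold_aux {K : Type*} [Field K] [Fintype K] (H : K[X]) (Q : ℕ) (hQ : Fintype.card K = Q)
    (hd : H.natDegree ≤ 2 * (Q - 1)) (h0 : ∀ d : K, d ≠ 0 → H.eval d = 0) (i : ℕ) (hi : 0 < i)
    (hi' : i < Q - 1) : H.coeff i + H.coeff (i + (Q - 1)) = 0 := by
  have hQ1 : 1 < Q := hQ ▸ Fintype.one_lt_card
  have hdeg := FiniteField.X_pow_card_sub_X_natDegree_eq K hQ1
  have hm : (X ^ Q - X : K[X]).Monic := by
    apply monic_X_pow_sub
    rw [degree_X]; exact_mod_cast hQ1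
  have hr : (X * H) %ₘ (X ^ Q - X) = 0 := by
    apply Polynomial.eq_zero_of_natDegree_lt_card_of_eval_eq_zero (f := (fun x : K => x)) _
      (fun x y h => h)
    · intro d
      have hdQ : d ^ Q = d := by rw [← hQ]; exact FiniteField.pow_card d
      have h1 : eval d ((X * H) %ₘ (X ^ Q - X)) = eval d (X * H) := by
        conv_rhs => rw [← modByMonic_add_div (X * H) (X ^ Q - X)]
        simp [hdQ]
      rw [h1]
      by_cases hd0 : d = 0
      · simp [hd0]
      · simp [h0 d hd0]
    · rw [hQ]
      have := natDegree_modByMonic_lt (X * H) hm (by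
        intro h; rw [h] at hdeg; simp at hdeg; omega)
      omega
  have hW := modByMonic_add_div (X * H) (X ^ Q - X)
  rw [hr, zero_add] at hW
  set W := (X * H) /ₘ (X ^ Q - X) with hWdef
  have hWd : W.natDegree ≤ Q - 1 := by
    rw [hWdef, natDegree_divByMonic _ hm, hdeg]
    have := natDegree_mul_le (p := X) (q := H)
    have := natDegree_X_le (R := K)
    omega
  have e1 : H.coeff i = (X * H).coeff (i + 1) := by rw [coeff_X_mul]
  have e2 : H.coeff (i + (Q - 1)) = (X * H).coeff (i + Q) := by
    rw [show i + Q = i + (Q - 1) + 1 by omega, coeff_X_mul]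
  rw [e1, e2, ← hW, sub_mul, coeff_sub, coeff_sub, coeff_X_mul, coeff_X_pow_mul, coeff_X_pow_mul',
    if_neg (by omega), show i + Q = i + (Q - 1) + 1 by omega, coeff_X_mul,
    coeff_eq_zero_of_natDegree_lt (p := W) (n := i + (Q - 1)) (by omega)]
  ring

open Polynomial in
lemma coeff_aux {K : Type*} [Field K] (A : K[X]) (r k i j : ℕ) (a : K) (hi : i < 5) (hj : j < 5)
    (hr : r = 5 * k + i) :
    (C a * X ^ j * expand K 5 A).coeff r = if i = j then a * A.coeff k else 0 := by
  subst hr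
  rw [mul_assoc, coeff_C_mul, coeff_X_pow_mul', coeff_expand (by norm_num)]
  by_cases h : i = j
  · subst h
    simp
  · rw [if_neg h]
    split_ifs with h1 h2
    · omega
    · simp
    · simp

open Polynomial in
lemma curve_aux {K : Type*} [Field K] [Fintype K] [CharP K 5] (k : ℕ) (hk : 2 ≤ k)
    (hQ : Fintype.card K = 5 * (2 * k + 1)) (T N : K) (hT : T ≠ 0) (hN : N ≠ 0)
    (hD : T ^ 2 ≠ 4 * N) : ∃ d s : K, d ≠ 0 ∧ 3 * T * s ^ 2 = d ^ 4 - T * d ^ 2 + N := by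
  by_contra! hcon
  have h5 : (5 : K) = 0 := by exact_mod_cast CharP.cast_eq_zero K 5
  have h3 : (3 : K) ≠ 0 := by
    intro h
    have : (1 : K) = 0 := by linear_combination 2 * h - h5
    exact one_ne_zero this
  have h2 : (2 : K) ≠ 0 := by
    intro h
    have : (1 : K) = 0 := by linear_combination 3 * h - h5
    exact one_ne_zero this
  have hchar : ringChar K ≠ 2 := by
    rw [ringChar.eq K 5]; norm_num
  haveI : Fact (Nat.Prime 5) := ⟨by norm_num⟩
  set c : K := 3 * T with hc
  have hc0 : c ≠ 0 := mul_ne_zero h3 hT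
  set R : K[X] := C c * (X ^ 2 - C T * X + C N) with hR
  obtain ⟨B, hB⟩ : ∃ B : K[X], expand K 5 B = R ^ 5 :=
    ⟨map (frobenius K 5) R, by rw [← map_frobenius_expand, map_expand]⟩
  have hBA : expand K 5 (B ^ k) = R ^ (5 * k) := by rw [map_pow, hB, pow_mul]
  set A := B ^ k with hA
  have ha0 : A.coeff 0 ≠ 0 := by
    have : A.coeff 0 = (R ^ (5 * k)).coeff 0 := by
      rw [← hBA, coeff_expand (by norm_num)]; simp
    rw [this, coeff_zero_eq_eval_zero, eval_pow]
    apply pow_ne_zero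
    simp [hR, hc0, hN]
  set G : K[X] := R ^ (5 * k + 2) with hG
  have hR2 : R ^ 2 = C (c ^ 2) * X ^ 4 + C (c ^ 2 * (-2 * T)) * X ^ 3
      + C (c ^ 2 * (T ^ 2 + 2 * N)) * X ^ 2 + C (c ^ 2 * (-2 * T * N)) * X ^ 1
      + C (c ^ 2 * N ^ 2) * X ^ 0 := by
    rw [hR]; simp only [map_mul, map_pow, map_add, map_neg, map_ofNat]; ring
  have hGe : G = R ^ 2 * expand K 5 A := by rw [hBA, hG]; ring
  have hGd : G.natDegree ≤ 2 * (5 * k + 2) := by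
    have : R.natDegree ≤ 2 := by rw [hR]; compute_degree
    refine natDegree_pow_le.trans ?_
    nlinarith
  have hval : ∀ d : K, d ≠ 0 → (expand K 2 G + 1).eval d = 0 := by
    intro d hd
    have he : (R.eval (d ^ 2)) = c * (d ^ 4 - T * d ^ 2 + N) := by
      simp [hR]; left; ring
    have hns : ¬ IsSquare (R.eval (d ^ 2)) := by
      rintro ⟨y, hy⟩
      rw [he] at hy
      apply hcon d (y / c) hd
      field_simp
      linear_combination -hy
    have hne : R.eval (d ^ 2) ≠ 0 := by
      intro h; apply hns; rw [h]; exact IsSquare.zero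
    have := FiniteField.pow_dichotomy hchar hne
    rw [← FiniteField.isSquare_iff hchar hne] at this
    have := this.resolve_left hns
    rw [show Fintype.card K / 2 = 5 * k + 2 by omega] at this
    rw [eval_add, expand_eval, hG, eval_pow, this]; simp
  have hfold : ∀ j, 0 < j → j < 5 * k + 2 → G.coeff j + G.coeff (j + (5 * k + 2)) = 0 := by
    intro j hj hj'
    have := fold_aux (expand K 2 G + 1) _ hQ (by
      refine (natDegree_add_le _ _).trans ?_
      rw [natDegree_expand]; simp; omega) hval (j * 2) (by omega) (by omega)
    rw [show j * 2 + (5 * (2 * k + 1) - 1) = (j + (5 * k + 2)) * 2 by omega] at this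
    rw [coeff_add, coeff_add, coeff_expand_mul (by norm_num), coeff_expand_mul (by norm_num),
      coeff_one, coeff_one, if_neg (by omega), if_neg (by omega)] at this
    simpa using this
  have f1 := hfold 1 (by omega) (by omega)
  have f2 := hfold 2 (by omega) (by omega)
  rw [hGe, hR2] at f1 f2
  simp only [add_mul, coeff_add] at f1 f2
  simp only [coeff_aux A 1 0 1 4 _ (by norm_num) (by norm_num) rfl,
    coeff_aux A 1 0 1 3 _ (by norm_num) (by norm_num) rfl,
    coeff_aux A 1 0 1 2 _ (by norm_num) (by norm_num) rfl,
    coeff_aux A 1 0 1 1 _ (by norm_num) (by norm_num) rfl,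
    coeff_aux A 1 0 1 0 _ (by norm_num) (by norm_num) rfl,
    coeff_aux A (1 + (5 * k + 2)) k 3 4 _ (by norm_num) (by norm_num) (by omega),
    coeff_aux A (1 + (5 * k + 2)) k 3 3 _ (by norm_num) (by norm_num) (by omega),
    coeff_aux A (1 + (5 * k + 2)) k 3 2 _ (by norm_num) (by norm_num) (by omega),
    coeff_aux A (1 + (5 * k + 2)) k 3 1 _ (by norm_num) (by norm_num) (by omega),
    coeff_aux A (1 + (5 * k + 2)) k 3 0 _ (by norm_num) (by norm_num) (by omega)] at f1
  simp only [
    coeff_aux A 2 0 2 4 _ (by norm_num) (by norm_num) rfl,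
    coeff_aux A 2 0 2 3 _ (by norm_num) (by norm_num) rfl,
    coeff_aux A 2 0 2 2 _ (by norm_num) (by norm_num) rfl,
    coeff_aux A 2 0 2 1 _ (by norm_num) (by norm_num) rfl,
    coeff_aux A 2 0 2 0 _ (by norm_num) (by norm_num) rfl,
    coeff_aux A (2 + (5 * k + 2)) k 4 4 _ (by norm_num) (by norm_num) (by omega),
    coeff_aux A (2 + (5 * k + 2)) k 4 3 _ (by norm_num) (by norm_num) (by omega),
    coeff_aux A (2 + (5 * k + 2)) k 4 2 _ (by norm_num) (by norm_num) (by omega),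
    coeff_aux A (2 + (5 * k + 2)) k 4 1 _ (by norm_num) (by norm_num) (by omega),
    coeff_aux A (2 + (5 * k + 2)) k 4 0 _ (by norm_num) (by norm_num) (by omega)] at f2
  norm_num at f1 f2
  have g1 : (c ^ 2 * (2 * T)) * (N * A.coeff 0 + A.coeff k) = 0 := by linear_combination -f1
  have g2 : (c ^ 2) * ((T ^ 2 + 2 * N) * A.coeff 0 + A.coeff k) = 0 := by linear_combination f2
  have g1' := (mul_eq_zero.1 g1).resolve_left (mul_ne_zero (pow_ne_zero _ hc0) (mul_ne_zero h2 hT))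
  have g2' := (mul_eq_zero.1 g2).resolve_left (pow_ne_zero _ hc0)
  have g3 : (T ^ 2 + N) * A.coeff 0 = 0 := by linear_combination g2' - g1'
  have g4 := (mul_eq_zero.1 g3).resolve_right ha0
  apply hD
  linear_combination g4 - N * h5

lemma embed_aux (n Q : ℕ) (hQ : Q = 5 ^ n) (hn : n ≠ 0)
    (F : Type*) [Field F] [Fintype F] (hF : Fintype.card F = Q ^ 2) [CharP F 5] :
    ∃ (K : Type) (_ : Field K) (_ : Fintype K) (i : K →+* F), Fintype.card K = Q ∧
      ∀ x : F, x ^ Q = x → ∃ k, i k = x := by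
  classical
  have : Fact (Nat.Prime 5) := ⟨by norm_num⟩
  letI : Algebra (ZMod 5) F := ZMod.algebra F 5
  have hc : Nat.card (GaloisField 5 n) = Q := by rw [GaloisField.card 5 n hn, hQ]
  letI : Fintype (GaloisField 5 n) := Fintype.ofFinite _
  have hc' : Fintype.card (GaloisField 5 n) = Q := by rw [← Nat.card_eq_fintype_card, hc]
  have hfr : Module.finrank (ZMod 5) F = n * 2 := by
    have h := FiniteField.pow_finrank_eq_card 5 F
    rw [hF, hQ, ← pow_mul] at h
    exact Nat.pow_right_injective (le_refl 2 |>.trans (by norm_num)) h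
  obtain ⟨i⟩ := FiniteField.nonempty_algHom_of_finrank_dvd (F := ZMod 5) (K := GaloisField 5 n)
    (L := F) (by rw [hfr, GaloisField.finrank 5 hn]; exact dvd_mul_right _ _)
  refine ⟨GaloisField 5 n, inferInstance, inferInstance, i.toRingHom, hc', ?_⟩
  have hQ1 : 1 < Q := hc' ▸ Fintype.one_lt_card
  have hne := FiniteField.X_pow_card_sub_X_ne_zero F hQ1
  set S := (Polynomial.X ^ Q - Polynomial.X : Polynomial F).roots.toFinset with hS
  have hScard : S.card ≤ Q := by
    refine (Multiset.toFinset_card_le _).trans ((Polynomial.card_roots' _).trans ?_)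
    rw [FiniteField.X_pow_card_sub_X_natDegree_eq F hQ1]
  have hsub : (Finset.univ.image i) ⊆ S := by
    intro x hx
    obtain ⟨k, -, rfl⟩ := Finset.mem_image.1 hx
    rw [hS, Multiset.mem_toFinset, Polynomial.mem_roots hne]
    have : k ^ Q = k := by rw [← hc']; exact FiniteField.pow_card k
    simp [← map_pow, this]
  have heq : (Finset.univ.image i) = S := by
    apply Finset.eq_of_subset_of_card_le hsub
    have hii : Function.Injective i := fun a b h => i.toRingHom.injective h
    rw [Finset.card_image_of_injective _ hii, Finset.card_univ, hc']; exact hScard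
  intro x hx
  have : x ∈ S := by
    rw [hS, Multiset.mem_toFinset, Polynomial.mem_roots hne]
    simp [hx]
  rw [← heq] at this
  obtain ⟨k, -, hk⟩ := Finset.mem_image.1 this
  exact ⟨k, hk⟩

lemma norm_aux (Q : ℕ) (hQ1 : 1 < Q)
    (F : Type*) [Field F] [Fintype F] (hF : Fintype.card F = Q ^ 2) (x : F) (hx : x ^ Q = x) :
    ∃ z : F, z ^ (Q + 1) = x := by
  classical
  by_cases hx0 : x = 0
  · exact ⟨0, by simp [hx0]⟩
  obtain ⟨g, hg⟩ := IsCyclic.exists_generator (α := Fˣ)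
  obtain ⟨j, hj⟩ := (Submonoid.mem_powers_iff _ _).1 (mem_powers_iff_mem_zpowers.2 (hg (Units.mk0 x hx0)))
  have ho : orderOf g = (Q + 1) * (Q - 1) := by
    rw [orderOf_eq_card_of_forall_mem_zpowers hg, Nat.card_units, Nat.card_eq_fintype_card, hF,
      ← Nat.sq_sub_sq, one_pow]
  have h1 : x ^ (Q - 1) = 1 := by
    have : x ^ (Q - 1) * x = 1 * x := by
      rw [← pow_succ, Nat.sub_add_cancel hQ1.le, hx, one_mul]
    exact mul_right_cancel₀ hx0 this
  have h2 : g ^ (j * (Q - 1)) = 1 := by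
    rw [pow_mul, hj]; ext; simpa using h1
  have h3 := orderOf_dvd_of_pow_eq_one h2
  rw [ho] at h3
  obtain ⟨l, hl⟩ := Nat.dvd_of_mul_dvd_mul_right (by omega) h3
  refine ⟨(g ^ l : Fˣ), ?_⟩
  rw [← Units.val_pow_eq_pow_val, ← pow_mul, mul_comm, ← hl, hj]; rfl

lemma key_aux (Q : ℕ) (F : Type*) [Field F]
    (hadd : ∀ a b : F, (a + b) ^ Q = a ^ Q + b ^ Q) (α : F) :
    ∀ a : F, (a ^ (Q + 1)) ^ Q = a ^ (Q + 1) → (a ^ (2 * Q + 3) + α * a) ^ (Q + 1) =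
      (a ^ (Q + 1)) ^ 5 + (α + α ^ Q) * (a ^ (Q + 1)) ^ 3 + α ^ (Q + 1) * a ^ (Q + 1) := by
  intro a ha
  have e : a ^ (2 * Q + 3) + α * a = a * ((a ^ (Q + 1)) ^ 2 + α) := by ring
  rw [e, mul_pow, pow_succ (_ + α) Q, hadd, ← pow_mul _ 2 Q, mul_comm 2 Q, pow_mul _ Q 2, ha]
  ring

/-- A collision of the reduced quintic gives a collision of the original map. -/
lemma noninj_aux (Q : ℕ) (hQ1 : 1 < Q)
    (F : Type*) [Field F] [Fintype F] (hF : Fintype.card F = Q ^ 2)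
    (hadd : ∀ a b : F, (a + b) ^ Q = a ^ Q + b ^ Q) (α : F)
    (hinj : Function.Injective (fun x : F => x ^ (2 * Q + 3) + α * x)) (x y : F) (hx : x ^ Q = x)
    (hy : y ^ Q = y)
    (hxy : x ^ 5 + (α + α ^ Q) * x ^ 3 + α ^ (Q + 1) * x
      = y ^ 5 + (α + α ^ Q) * y ^ 3 + α ^ (Q + 1) * y) : x = y := by
  obtain ⟨z, hz⟩ := norm_aux Q hQ1 F hF x hx
  obtain ⟨w, hw⟩ := norm_aux Q hQ1 F hF y hy
  have key := key_aux Q F hadd α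
  have kz := key z (by rw [hz, hx])
  have kw := key w (by rw [hw, hy])
  rw [hz] at kz
  rw [hw] at kw
  have hn : (z ^ (2 * Q + 3) + α * z) ^ (Q + 1) = (w ^ (2 * Q + 3) + α * w) ^ (Q + 1) := by
    rw [kz, kw, hxy]
  by_cases h0 : z ^ (2 * Q + 3) + α * z = 0
  · have h0' : w ^ (2 * Q + 3) + α * w = 0 := by
      rw [h0, zero_pow (by omega)] at hn
      exact (pow_eq_zero_iff (by omega)).1 hn.symm
    have : z = w := hinj (by simp only [h0, h0'])
    rw [← hz, ← hw, this]
  · set ε := (w ^ (2 * Q + 3) + α * w) / (z ^ (2 * Q + 3) + α * z) with hε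
    have hε1 : ε ^ (Q + 1) = 1 := by
      rw [hε, div_pow, ← hn, div_self (pow_ne_zero _ h0)]
    have hεm : ε * (z ^ (2 * Q + 3) + α * z) = w ^ (2 * Q + 3) + α * w := by
      rw [hε, div_mul_cancel₀ _ h0]
    have : ε * z = w := by
      apply hinj
      show (ε * z) ^ (2 * Q + 3) + α * (ε * z) = w ^ (2 * Q + 3) + α * w
      rw [← hεm, mul_pow, show ε ^ (2 * Q + 3) = (ε ^ (Q + 1)) ^ 2 * ε by ring, hε1]
      ring
    rw [← hw, ← this, mul_pow, hε1, one_mul, hz]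

theorem stmt_15 (n Q : ℕ) (hQ : Q = 5 ^ n) (hQ5 : 5 < Q)
    (F : Type*) [Field F] [Fintype F] (hF : Fintype.card F = Q ^ 2)
    (α : F) (hα : α ≠ 0) :
    Function.Bijective (fun x : F => x ^ (2 * Q + 3) + α * x) ↔
      α ^ (Q - 1) = -1 ∨ α ^ ((Q - 1) / 2) = -1 := by
  have : Fact (Nat.Prime 5) := ⟨by norm_num⟩
  have hn2 : 2 ≤ n := by
    by_contra h
    have : n = 0 ∨ n = 1 := by omega
    rcases this with rfl | rfl <;> omega
  have hch : CharP F 5 := charP_of_card_eq_prime_pow (f := n * 2) (by rw [hF, hQ, pow_mul])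
  have h5 : (5 : F) = 0 := by exact_mod_cast CharP.cast_eq_zero F 5
  have h2 : (2 : F) ≠ 0 := by
    intro h
    have : (1 : F) = 0 := by linear_combination 3 * h - h5
    exact one_ne_zero this
  have hadd : ∀ a b : F, (a + b) ^ Q = a ^ Q + b ^ Q := by
    intro a b; rw [hQ]; exact add_pow_char_pow a b 5 n
  have hsub : ∀ a b : F, (a - b) ^ Q = a ^ Q - b ^ Q := by
    intro a b; rw [hQ]; exact sub_pow_char_pow a b n
  obtain ⟨k, hk, hQk⟩ : ∃ k, 2 ≤ k ∧ Q = 5 * (2 * k + 1) := by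
    obtain ⟨m, rfl⟩ : ∃ m, n = m + 2 := ⟨n - 2, by omega⟩
    have ho : Odd (5 ^ m) := Odd.pow (by decide)
    obtain ⟨l, hl⟩ := ho
    refine ⟨5 * l + 2, by omega, ?_⟩
    rw [hQ, pow_add, hl]; ring
  have hQQ : ∀ a : F, (a ^ Q) ^ Q = a := by
    intro a; rw [← pow_mul, ← sq, ← hF]; exact FiniteField.pow_card a
  have h2Q : (2 : F) ^ Q = 2 := by
    have := hadd 1 1
    rw [one_pow, one_add_one_eq_two] at this
    exact this
  have hsq : (Q - 1) / 2 * 2 = Q - 1 := by omega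
  have hpred : ∀ a : F, a ≠ 0 → a ^ Q = a → a ^ (Q - 1) = 1 := by
    intro a ha h
    have : a ^ (Q - 1) * a = 1 * a := by rw [← pow_succ, Nat.sub_add_cancel (by omega), h, one_mul]
    exact mul_right_cancel₀ ha this
  constructor
  · intro hbij
    have hinj := hbij.1
    have hcol := noninj_aux Q (by omega) F hF hadd α hinj
    by_cases hT : α + α ^ Q = 0
    · left
      have : α ^ (Q - 1) * α = -1 * α := by
        rw [← pow_succ, Nat.sub_add_cancel (by omega)]; linear_combination hT
      exact mul_right_cancel₀ hα this
    right
    obtain ⟨K, _, _, i, hKc, hKi⟩ := embed_aux n Q hQ (by omega) F hF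
    have hKch : CharP K 5 := charP_of_card_eq_prime_pow (f := n) (by rw [hKc, hQ])
    have hiQ : ∀ a : K, (i a) ^ Q = i a := by
      intro a; rw [← map_pow, ← hKc, FiniteField.pow_card]
    by_cases hαQ : α ^ Q = α
    · obtain ⟨a, ha⟩ := hKi α hαQ
      have ha0 : a ≠ 0 := by rintro rfl; simp at ha; exact hα ha.symm
      have hchar : ringChar K ≠ 2 := by rw [ringChar.eq K 5]; norm_num
      have hd := FiniteField.pow_dichotomy hchar ha0
      have hdiv : Fintype.card K / 2 = (Q - 1) / 2 := by omega
      rw [← FiniteField.isSquare_iff hchar ha0, hdiv] at hd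
      rcases hd with ⟨s, hs⟩ | hd
      · exfalso
        have hs' : i s ^ 2 = α := by rw [← ha, hs, map_mul, sq]
        have := hcol (2 * i s) 0 (by rw [mul_pow, h2Q, hiQ]) (by rw [zero_pow (by omega)]) (by
          rw [pow_succ α Q, hαQ, ← hs']
          linear_combination (i s) ^ 5 * 10 * h5)
        have : i s = 0 := (mul_eq_zero.1 this).resolve_left h2
        rw [this] at hs'
        apply hα; rw [← hs']; simp
      · rw [← ha, ← map_pow, hd]; simp
    · exfalso
      obtain ⟨T, hT'⟩ := hKi (α + α ^ Q) (by rw [hadd, hQQ]; ring)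
      obtain ⟨N, hN'⟩ := hKi (α ^ (Q + 1)) (by rw [pow_succ, mul_pow, hQQ]; ring)
      obtain ⟨d, s, hd, hds⟩ := curve_aux k hk (hKc.trans hQk) T N
        (by rintro rfl; apply hT; rw [← hT', map_zero])
        (by rintro rfl; rw [map_zero] at hN'; exact pow_ne_zero _ hα hN'.symm)
        (by
          intro h
          apply hαQ
          have h' := congrArg i h
          rw [map_mul, map_pow, hT', hN', map_ofNat] at h'
          have : (α ^ Q - α) ^ 2 = 0 := by linear_combination h'
          exact sub_eq_zero.1 ((pow_eq_zero_iff (by norm_num)).1 this))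
      have hds' := congrArg i hds
      simp only [map_mul, map_add, map_sub, map_pow, map_ofNat, hT', hN'] at hds'
      have hxy := hcol (3 * (i s + i d)) (3 * (i s - i d))
        (by
          have := hiQ (3 * (s + d)); simpa [map_ofNat i 3] using this)
        (by
          have := hiQ (3 * (s - d)); simpa [map_ofNat i 3] using this) (by
          generalize i s = S at *
          generalize i d = D at *
          generalize α + α ^ Q = t at *
          generalize α ^ (Q + 1) = v at *
          linear_combination -D * hds' + (97 * D ^ 5 + 11 * t * D ^ 3 + 33 * t * S ^ 2 * D + v * D
            + 486 * S ^ 4 * D + 972 * S ^ 2 * D ^ 3) * h5)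
      apply hd
      apply i.injective
      rw [map_zero]
      linear_combination hxy - i d * h5
  · intro hor
    rw [← Finite.injective_iff_bijective]
    have hαQ : α ^ Q = -α ∨ α ^ Q = α := by
      have e : α ^ Q = α ^ (Q - 1) * α := by rw [← pow_succ, Nat.sub_add_cancel (by omega)]
      rcases hor with h | h
      · left; rw [e, h]; ring
      · right; rw [e, ← hsq, pow_mul, h]; ring
    have hnsq : ∀ t : F, t ^ Q = t → t ^ 2 ≠ α := by
      intro t ht h
      have ht0 : t ≠ 0 := by rintro rfl; apply hα; rw [← h]; simp
      have h11 : (1 : F) ≠ -1 := by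
        intro h'; apply h2; linear_combination h'
      have h1 := hpred t ht0 ht
      rcases hor with h' | h'
      · rw [← h, ← pow_mul, mul_comm, pow_mul, h1, one_pow] at h'
        exact h11 h'
      · rw [← h, ← pow_mul, mul_comm, hsq, h1] at h'
        exact h11 h'
    have hnv : ∀ t : F, t ^ Q = t → t ^ 2 + α ≠ 0 := by
      intro t ht h
      apply hnsq (2 * t) (by rw [mul_pow, h2Q, ht])
      linear_combination -h + t ^ 2 * h5
    have hg : ∀ x y : F, x ^ Q = x → y ^ Q = y →
      x ^ 5 + (α + α ^ Q) * x ^ 3 + α ^ (Q + 1) * x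
      = y ^ 5 + (α + α ^ Q) * y ^ 3 + α ^ (Q + 1) * y → x = y := by
      intro x y hx hy h
      have hdQ : (x - y) ^ Q = x - y := by rw [hsub, hx, hy]
      have hsQ : (x + y) ^ Q = x + y := by rw [hadd, hx, hy]
      by_contra hne
      have hd0 : x - y ≠ 0 := sub_ne_zero.2 hne
      rw [pow_succ α Q] at h
      rcases hαQ with hQ' | hQ'
      · rw [hQ'] at h
        have e : (x - y) * ((x - y) ^ 2 - α) * ((x - y) ^ 2 + α) = 0 := by
          linear_combination h + (-x ^ 4 * y + 2 * x ^ 3 * y ^ 2 - 2 * x ^ 2 * y ^ 3 + x * y ^ 4) * h5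
        rcases mul_eq_zero.1 e with e | e
        · rcases mul_eq_zero.1 e with e | e
          · exact hd0 e
          · exact hnsq _ hdQ (sub_eq_zero.1 e)
        · exact hnv _ hdQ e
      · rw [hQ'] at h
        have e : (x - y) * (((x - y) ^ 2 - α) ^ 2 - α * (x + y) ^ 2) = 0 := by
          linear_combination h + (-x ^ 4 * y + 2 * x ^ 3 * y ^ 2 - 2 * x ^ 2 * y ^ 3 + x * y ^ 4
            + α * (-x ^ 3 + y ^ 3 + x ^ 2 * y - x * y ^ 2)) * h5
        have e := (mul_eq_zero.1 e).resolve_left hd0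
        by_cases hs : x + y = 0
        · rw [hs] at e
          have e' : ((x - y) ^ 2 - α) ^ 2 = 0 := by linear_combination e
          exact hnsq _ hdQ (sub_eq_zero.1 ((pow_eq_zero_iff (by norm_num)).1 e'))
        · apply hnsq (((x - y) ^ 2 - α) / (x + y))
          · rw [div_pow, hsub, ← pow_mul, mul_comm 2 Q, pow_mul, hdQ, hsQ, hQ']
          · field_simp
            linear_combination e
    intro z w hzw
    simp only at hzw
    have hfix : ∀ a : F, (a ^ (Q + 1)) ^ Q = a ^ (Q + 1) := by
      intro a; rw [pow_succ, mul_pow, hQQ]; ring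
    have key := key_aux Q F hadd α
    have hN : z ^ (Q + 1) = w ^ (Q + 1) := by
      apply hg _ _ (hfix z) (hfix w)
      rw [← key z (hfix z), ← key w (hfix w), hzw]
    have e1 : z ^ (2 * Q + 3) + α * z = z * ((z ^ (Q + 1)) ^ 2 + α) := by ring
    have e2 : w ^ (2 * Q + 3) + α * w = w * ((w ^ (Q + 1)) ^ 2 + α) := by ring
    rw [e1, e2, hN] at hzw
    exact mul_right_cancel₀ (hnv _ (hfix w)) hzw
end
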